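/- Let 𝓕 be an EKR-set of chambers of maximum cardinality among all EKR-sets of chambers. (a) If S₁ and S₂ are heavy totally isotropic subspaces (of any dimensions), then S₁ ∩ S₂^⊥ ≠ {0}. (b) If S is a heavy totally isotropic s-space, then every chamber C ∈ 𝓕 satisfies C_s^⊥ ∩ S ≠ {0}. -/

import Mathlib

open scoped Classical

open Module

section Defs

variable {F V : Type} [Field F] [AddCommGroup V] [Module F V]

/-- The orthogonal complement of a subspace with respect to a bilinear form. -/
def bperp (B : V →ₗ[F] V →ₗ[F] F) (W : Submodule F V) : Submodule F V :=
  ⨅ w ∈ W, LinearMap.ker (B w)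

/-- A subspace is totally isotropic for `B`. -/
def IsTotIso (B : V →ₗ[F] V →ₗ[F] F) (W : Submodule F V) : Prop :=
  ∀ u ∈ W, ∀ w ∈ W, B u w = 0

/-- `B` is an alternating form. -/
def IsAltForm (B : V →ₗ[F] V →ₗ[F] F) : Prop := ∀ v, B v v = 0

/-- `B` is nondegenerate. -/
def NondegForm (B : V →ₗ[F] V →ₗ[F] F) : Prop := ∀ v, (∀ w, B v w = 0) → v = 0

/-- A flag of type `J` of totally isotropic subspaces: entries outside `J` are `⊥`. -/
structure SFlag (B : V →ₗ[F] V →ₗ[F] F) (J : Finset ℕ) where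
  space : ℕ → Submodule F V
  isotropic : ∀ i ∈ J, IsTotIso B (space i)
  finrank_eq : ∀ i ∈ J, Module.finrank F (space i) = i
  mono : ∀ i ∈ J, ∀ j ∈ J, i ≤ j → space i ≤ space j
  eq_bot : ∀ i, i ∉ J → space i = ⊥

/-- Two flags of type `J` are opposite. -/
def FlagOpp {B : V →ₗ[F] V →ₗ[F] F} {J : Finset ℕ} (C C' : SFlag B J) : Prop :=
  ∀ i ∈ J, bperp B (C.space i) ⊓ C'.space i = ⊥

/-- An EKR-set of flags of type `J`: no two members are opposite. -/
def IsEKRFlags {B : V →ₗ[F] V →ₗ[F] F} {J : Finset ℕ} (𝓕 : Set (SFlag B J)) : Prop :=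
  ∀ C ∈ 𝓕, ∀ C' ∈ 𝓕, ¬ FlagOpp C C'

/-- Two subspaces are opposite. -/
def SpaceOpp (B : V →ₗ[F] V →ₗ[F] F) (S T : Submodule F V) : Prop :=
  bperp B S ⊓ T = ⊥

/-- An EKR-set of totally isotropic `s`-spaces: no two members are opposite. -/
def IsEKRSpaces (B : V →ₗ[F] V →ₗ[F] F) (s : ℕ) (𝓕 : Set (Submodule F V)) : Prop :=
  (∀ S ∈ 𝓕, IsTotIso B S ∧ Module.finrank F S = s) ∧
    ∀ S ∈ 𝓕, ∀ T ∈ 𝓕, ¬ SpaceOpp B S T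

/-- An `s`-space `S` is heavy with respect to a set `𝓕` of flags: every flag whose
`s`-th entry equals `S` belongs to `𝓕`. -/
def Heavy {B : V →ₗ[F] V →ₗ[F] F} {J : Finset ℕ} (𝓕 : Set (SFlag B J)) (s : ℕ)
    (S : Submodule F V) : Prop :=
  ∀ C : SFlag B J, C.space s = S → C ∈ 𝓕

end Defs

/-- `z_k = ∏_{i=1}^k (q^i-1)/(q-1)`. -/
noncomputable def zpol (q k : ℕ) : ℝ :=
  ∏ i ∈ Finset.Icc 1 k, ((q : ℝ) ^ i - 1) / ((q : ℝ) - 1)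

/-- The Gaussian binomial coefficient `[m choose k]_q` as a real number. -/
noncomputable def gaussq (q m k : ℕ) : ℝ :=
  ∏ i ∈ Finset.Icc 1 k, ((q : ℝ) ^ (m - k + i) - 1) / ((q : ℝ) ^ i - 1)

/-- `Φ_m^s` in `PS(n,1,q)`: the number of totally isotropic `s`-spaces containing a
fixed totally isotropic `m`-space. -/
noncomputable def PhiP (q n m s : ℕ) : ℝ :=
  gaussq q (n - m) (s - m) * ∏ i ∈ Finset.Icc 1 (s - m), ((q : ℝ) ^ (n - m + 1 - i) + 1)

section Helpers

variable {F V : Type} [Field F] [AddCommGroup V] [Module F V]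

theorem mem_bperp {B : V →ₗ[F] V →ₗ[F] F} {W : Submodule F V} {v : V} :
    v ∈ bperp B W ↔ ∀ w ∈ W, B w v = 0 := by
  simp [bperp]

theorem alt_swap {B : V →ₗ[F] V →ₗ[F] F} (halt : IsAltForm B) (u v : V) :
    B u v = - B v u := by
  have h := halt (u + v)
  simp only [map_add, LinearMap.add_apply, halt u, halt v] at h
  linear_combination h

theorem alt_zero {B : V →ₗ[F] V →ₗ[F] F} (halt : IsAltForm B) {u v : V} (h : B u v = 0) :
    B v u = 0 := by
  rw [alt_swap halt, h, neg_zero]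

theorem inter_bot {A E : Submodule F V} (h : A ⊓ E = ⊥) {x : V} (h1 : x ∈ A) (h2 : x ∈ E) :
    x = 0 := by
  have : x ∈ A ⊓ E := ⟨h1, h2⟩
  rw [h] at this
  simpa using this

variable [FiniteDimensional F V]

theorem finrank_le_of_opp {B : V →ₗ[F] V →ₗ[F] F} (halt : IsAltForm B) {A E : Submodule F V}
    (h : A ⊓ bperp B E = ⊥) : finrank F A ≤ finrank F E := by
  let f : A →ₗ[F] Dual F E := (B.domRestrict₁₂ A E)
  have hf : Function.Injective f := by
    rw [← LinearMap.ker_eq_bot, LinearMap.ker_eq_bot']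
    intro a ha
    have : (a : V) = 0 := by
      refine inter_bot h a.2 (mem_bperp.2 fun w hw => alt_zero halt ?_)
      have := LinearMap.congr_fun ha ⟨w, hw⟩
      exact this
    exact Subtype.ext this
  have := LinearMap.finrank_le_finrank_of_injective hf
  rwa [Subspace.dual_finrank_eq] at this

theorem exists_opp_sub {B : V →ₗ[F] V →ₗ[F] F} (halt : IsAltForm B) {A E : Submodule F V}
    (h : A ⊓ bperp B E = ⊥) :
    ∃ D ≤ E, D ⊓ bperp B A = ⊥ ∧ finrank F D = finrank F A := by
  obtain ⟨Q, hQ⟩ := Submodule.exists_isCompl (bperp B A ⊓ E)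
  have h1 : (Q ⊓ E) ⊓ bperp B A = ⊥ := by
    rw [eq_bot_iff, ← hQ.inf_eq_bot]
    rintro x ⟨⟨hx1, hx2⟩, hx3⟩
    exact ⟨⟨hx3, hx2⟩, hx1⟩
  have h2 : A ⊓ bperp B (Q ⊓ E) = ⊥ := by
    rw [eq_bot_iff]
    rintro x ⟨hxA, hx⟩
    refine (Submodule.mem_bot F).2 (inter_bot h hxA (mem_bperp.2 fun w hw => ?_))
    have hw' : w ∈ (bperp B A ⊓ E) ⊔ Q := by rw [hQ.sup_eq_top]; trivial
    obtain ⟨y, hy, z, hz, rfl⟩ := Submodule.mem_sup.1 hw'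
    have hzE : z ∈ E := by
      have := E.sub_mem hw hy.2
      simpa using this
    rw [map_add, LinearMap.add_apply, mem_bperp.1 hx z ⟨hz, hzE⟩,
      alt_zero halt (mem_bperp.1 hy.1 x hxA), add_zero]
  exact ⟨Q ⊓ E, inf_le_right, h1,
    le_antisymm (finrank_le_of_opp halt h1) (finrank_le_of_opp halt h2)⟩

theorem opp_symm {B : V →ₗ[F] V →ₗ[F] F} (halt : IsAltForm B) {A E : Submodule F V}
    (hr : finrank F A = finrank F E) (h : A ⊓ bperp B E = ⊥) : E ⊓ bperp B A = ⊥ := by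
  obtain ⟨D, hD, h1, h2⟩ := exists_opp_sub halt h
  rwa [Submodule.eq_of_le_of_finrank_eq hD (h2.trans hr)] at h1

theorem exists_sep {B : V →ₗ[F] V →ₗ[F] F} (halt : IsAltForm B) (hnd : NondegForm B)
    {U : Submodule F V} {c : V} (hc : c ∉ U) : ∃ d ∈ bperp B U, B c d ≠ 0 := by
  have hinj : Function.Injective B := by
    rw [← LinearMap.ker_eq_bot, LinearMap.ker_eq_bot']
    intro v hv
    exact hnd v fun w => by rw [hv]; rfl
  have hsurj : Function.Surjective B :=
    (LinearMap.injective_iff_surjective_of_finrank_eq_finrank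
      (Subspace.dual_finrank_eq (K := F) (V := V)).symm).1 hinj
  obtain ⟨f, hf, hU⟩ := Submodule.exists_le_ker_of_notMem hc
  obtain ⟨v, rfl⟩ := hsurj f
  refine ⟨v, mem_bperp.2 fun w hw => alt_zero halt (hU hw), fun h0 => hf (alt_zero halt h0)⟩

theorem isTotIso_sup_span {B : V →ₗ[F] V →ₗ[F] F} (halt : IsAltForm B) {W : Submodule F V}
    (hW : IsTotIso B W) {d : V} (hd : d ∈ bperp B W) : IsTotIso B (W ⊔ Submodule.span F {d}) := by
  intro u hu w hw
  obtain ⟨u1, hu1, u2, hu2, rfl⟩ := Submodule.mem_sup.1 hu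
  obtain ⟨w1, hw1, w2, hw2, rfl⟩ := Submodule.mem_sup.1 hw
  obtain ⟨a, rfl⟩ := Submodule.mem_span_singleton.1 hu2
  obtain ⟨b, rfl⟩ := Submodule.mem_span_singleton.1 hw2
  simp [hW u1 hu1 w1 hw1, mem_bperp.1 hd u1 hu1, alt_zero halt (mem_bperp.1 hd w1 hw1), halt d]

theorem finrank_sup_span {W : Submodule F V} {d : V} (hd : d ∉ W) :
    finrank F ↥(W ⊔ Submodule.span F {d}) = finrank F W + 1 := by
  have h0 : d ≠ 0 := fun h => hd (h ▸ W.zero_mem)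
  have h := Submodule.finrank_sup_add_finrank_inf_eq W (Submodule.span F {d})
  have hb : W ⊓ Submodule.span F {d} = ⊥ := by
    rw [← disjoint_iff]
    exact (Submodule.disjoint_span_singleton' h0).2 hd
  rw [hb, finrank_bot, finrank_span_singleton h0] at h
  simpa using h

theorem IsTotIso.mono {B : V →ₗ[F] V →ₗ[F] F} {W W' : Submodule F V} (hW : IsTotIso B W)
    (h : W' ≤ W) : IsTotIso B W' := fun u hu w hw => hW u (h hu) w (h hw)

theorem step_up {B : V →ₗ[F] V →ₗ[F] F} (halt : IsAltForm B) (hnd : NondegForm B)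
    {C C' D : Submodule F V} (hC : IsTotIso B C') (hCC : C ≤ C')
    (hlt : finrank F C < finrank F C') (hD : IsTotIso B D) (hr : finrank F C = finrank F D)
    (hop : bperp B C ⊓ D = ⊥) :
    ∃ D', D ≤ D' ∧ IsTotIso B D' ∧ finrank F D' = finrank F D + 1 ∧ bperp B C' ⊓ D' = ⊥ := by
  obtain ⟨c, hc, hcC⟩ : ∃ c ∈ C', c ∉ C := by
    by_contra! hcon
    exact absurd (Submodule.finrank_mono (show C' ≤ C from hcon)) (not_le.2 hlt)
  have hcU : c ∉ C ⊔ D := by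
    intro hcU
    obtain ⟨x, hx, y, hy, rfl⟩ := Submodule.mem_sup.1 hcU
    apply hcC
    have : y = 0 := by
      refine inter_bot hop (mem_bperp.2 fun w hw => ?_) hy
      have h1 := hC w (hCC hw) _ hc
      rwa [map_add, hC w (hCC hw) x (hCC hx), zero_add] at h1
    rwa [this, add_zero]
  obtain ⟨d, hd, hcd⟩ := exists_sep halt hnd hcU
  have hdC : ∀ w ∈ C, B w d = 0 := fun w hw => mem_bperp.1 hd w (Submodule.mem_sup_left hw)
  have hdD : d ∈ bperp B D := mem_bperp.2 fun w hw => mem_bperp.1 hd w (Submodule.mem_sup_right hw)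
  have hdnot : d ∉ D := by
    intro h
    have := inter_bot hop (mem_bperp.2 hdC) h
    simp [this] at hcd
  refine ⟨D ⊔ Submodule.span F {d}, le_sup_left, isTotIso_sup_span halt hD hdD,
    finrank_sup_span hdnot, ?_⟩
  rw [eq_bot_iff]
  rintro x ⟨hx, hxD⟩
  obtain ⟨y, hy, z, hz, rfl⟩ := Submodule.mem_sup.1 hxD
  obtain ⟨a, rfl⟩ := Submodule.mem_span_singleton.1 hz
  have hx := mem_bperp.1 hx
  have hy0 : y = 0 := by
    refine inter_bot hop (mem_bperp.2 fun w hw => ?_) hy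
    simpa [hdC w hw] using hx w (hCC hw)
  subst hy0
  have := hx c hc
  simp [hcd] at this
  simp [this]

theorem step_down {B : V →ₗ[F] V →ₗ[F] F} (halt : IsAltForm B)
    {C C' D : Submodule F V} (hCC : C ≤ C') (hr : finrank F C' = finrank F D)
    (hop : bperp B C' ⊓ D = ⊥) :
    ∃ D' ≤ D, finrank F D' = finrank F C ∧ bperp B C ⊓ D' = ⊥ := by
  have h := opp_symm halt hr.symm (by rwa [inf_comm])
  have h' : C ⊓ bperp B D = ⊥ := by
    rw [eq_bot_iff, ← h]
    exact inf_le_inf_right _ hCC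
  obtain ⟨D', h1, h2, h3⟩ := exists_opp_sub halt h'
  exact ⟨D', h1, h3, by rwa [inf_comm]⟩

theorem exists_ext {B : V →ₗ[F] V →ₗ[F] F} (halt : IsAltForm B)
    {W : Submodule F V} (h : 2 * finrank F W < finrank F V) : ∃ d ∈ bperp B W, d ∉ W := by
  by_contra! hcon
  let f : V →ₗ[F] Dual F W := (B.domRestrict₁₂ W ⊤).flip ∘ₗ
    (Submodule.topEquiv (R := F) (M := V)).symm.toLinearMap
  have hk : LinearMap.ker f ≤ W := by
    intro v hv
    refine hcon v (mem_bperp.2 fun w hw => ?_)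
    have := LinearMap.congr_fun (LinearMap.mem_ker.1 hv) ⟨w, hw⟩
    exact this
  have h1 := LinearMap.finrank_range_add_finrank_ker f
  have h2 := Submodule.finrank_mono hk
  have h3 := Submodule.finrank_le (LinearMap.range f)
  rw [Subspace.dual_finrank_eq] at h3
  omega

theorem chain_up (P : ℕ → Submodule F V → Prop) (s : ℕ) (S : Submodule F V) (hS : P s S) (m : ℕ)
    (up : ∀ k W, s ≤ k → k < s + m → P k W → ∃ W', W ≤ W' ∧ P (k + 1) W') :
    ∃ c : ℕ → Submodule F V, c s = S ∧ (∀ i, s ≤ i → i ≤ s + m → P i (c i)) ∧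
      (∀ i, s ≤ i → i < s + m → c i ≤ c (i + 1)) := by
  induction m with
  | zero =>
    refine ⟨fun _ => S, rfl, fun i h1 h2 => ?_, fun i h1 h2 => by omega⟩
    obtain rfl : i = s := by omega
    exact hS
  | succ m ih =>
    obtain ⟨c, h0, h1, h2⟩ := ih fun k W a b => up k W a (by omega)
    obtain ⟨W', hW, hP⟩ := up (s + m) (c (s + m)) (by omega) (by omega)
      (h1 _ (by omega) (by omega))
    refine ⟨fun i => if i ≤ s + m then c i else W', by simp [h0], fun i a b => ?_,
      fun i a b => ?_⟩
    · by_cases hi : i ≤ s + m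
      · simpa [hi] using h1 i a hi
      · obtain rfl : i = s + m + 1 := by omega
        simpa [hi] using hP
    · by_cases hi : i + 1 ≤ s + m
      · simpa [hi, show i ≤ s + m by omega] using h2 i a (by omega)
      · obtain rfl : i = s + m := by omega
        simpa using hW

theorem chain_down (P : ℕ → Submodule F V → Prop) (m : ℕ) : ∀ (S : Submodule F V), P (m + 1) S →
    (∀ k W, 1 ≤ k → k < m + 1 → P (k + 1) W → ∃ W' ≤ W, P k W') →
    ∃ c : ℕ → Submodule F V, c (m + 1) = S ∧ (∀ i, 1 ≤ i → i ≤ m + 1 → P i (c i)) ∧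
      (∀ i, 1 ≤ i → i < m + 1 → c i ≤ c (i + 1)) := by
  induction m with
  | zero =>
    intro S hS _
    refine ⟨fun _ => S, rfl, fun i h1 h2 => ?_, fun i h1 h2 => by omega⟩
    obtain rfl : i = 1 := by omega
    exact hS
  | succ m ih =>
    intro S hS down
    obtain ⟨W', hW, hP⟩ := down (m + 1) S (by omega) (by omega) hS
    obtain ⟨c, h0, h1, h2⟩ := ih W' hP fun k W a b => down k W a (by omega)
    refine ⟨fun i => if i ≤ m + 1 then c i else S, by simp, fun i a b => ?_,
      fun i a b => ?_⟩
    · by_cases hi : i ≤ m + 1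
      · simpa [hi] using h1 i a hi
      · obtain rfl : i = m + 1 + 1 := by omega
        simpa [hi] using hS
    · by_cases hi : i + 1 ≤ m + 1
      · simpa [hi, show i ≤ m + 1 by omega] using h2 i a (by omega)
      · obtain rfl : i = m + 1 := by omega
        simpa [h0] using hW

theorem exists_flag {B : V →ₗ[F] V →ₗ[F] F} (n : ℕ) (P : ℕ → Submodule F V → Prop)
    (hP : ∀ k W, P k W → IsTotIso B W ∧ finrank F W = k)
    (s : ℕ) (hs : s ∈ Finset.Icc 1 n) (S : Submodule F V) (hS : P s S)
    (up : ∀ k W, s ≤ k → k < n → P k W → ∃ W', W ≤ W' ∧ P (k + 1) W')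
    (down : ∀ k W, 1 ≤ k → k < s → P (k + 1) W → ∃ W' ≤ W, P k W') :
    ∃ C : SFlag B (Finset.Icc 1 n), C.space s = S ∧ ∀ i ∈ Finset.Icc 1 n, P i (C.space i) := by
  rw [Finset.mem_Icc] at hs
  obtain ⟨u, u0, u1, u2⟩ := chain_up P s S hS (n - s) fun k W a b => up k W a (by omega)
  obtain ⟨m, rfl⟩ : ∃ m, s = m + 1 := ⟨s - 1, by omega⟩
  obtain ⟨d, d0, d1, d2⟩ := chain_down P m S hS down
  let c : ℕ → Submodule F V := fun i =>
    if i ∈ Finset.Icc 1 n then (if i ≤ m + 1 then d i else u i) else ⊥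
  have c1 : ∀ i, 1 ≤ i → i ≤ m + 1 → c i = d i := fun i a b => by
    simp [c, a, b, show i ≤ n by omega]
  have c2 : ∀ i, m + 1 ≤ i → i ≤ n → c i = u i := fun i a b => by
    by_cases h : i = m + 1
    · subst h; rw [c1 _ (by omega) le_rfl, d0, u0]
    · simp [c, b, show 1 ≤ i by omega, show ¬ i ≤ m + 1 by omega]
  have hc : ∀ i ∈ Finset.Icc 1 n, P i (c i) := by
    intro i hi
    rw [Finset.mem_Icc] at hi
    by_cases h : i ≤ m + 1
    · rw [c1 i hi.1 h]; exact d1 i hi.1 h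
    · rw [c2 i (by omega) hi.2]; exact u1 i (by omega) (by omega)
  have hstep : ∀ i, 1 ≤ i → i < n → c i ≤ c (i + 1) := by
    intro i a b
    by_cases h : i < m + 1
    · rw [c1 i a h.le, c1 (i + 1) (by omega) h]; exact d2 i a h
    · rw [c2 i (by omega) b.le, c2 (i + 1) (by omega) b]; exact u2 i (by omega) (by omega)
  refine ⟨⟨c, fun i hi => (hP _ _ (hc i hi)).1, fun i hi => (hP _ _ (hc i hi)).2, ?_, ?_⟩, ?_, hc⟩
  · intro i hi j hj hij
    rw [Finset.mem_Icc] at hi hj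
    induction j, hij using Nat.le_induction with
    | base => exact le_rfl
    | succ j hij ih => exact (ih ⟨by omega, by omega⟩).trans (hstep j (by omega) (by omega))
  · intro i hi
    simp only [c, if_neg hi]
  · change c (m + 1) = S
    rw [c1 _ (by omega) le_rfl, d0]

theorem exists_hyper {W : Submodule F V} {k : ℕ} (h : finrank F W = k + 1) :
    ∃ W' ≤ W, finrank F W' = k := by
  let b := Module.finBasisOfFinrankEq F W h
  have hli : LinearIndependent F (fun i : Fin k => (b i.castSucc : V)) :=
    (b.linearIndependent.map' W.subtype W.ker_subtype).comp _ (Fin.castSucc_injective k)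
  refine ⟨Submodule.span F (Set.range fun i : Fin k => (b i.castSucc : V)), ?_, ?_⟩
  · rw [Submodule.span_le]
    rintro _ ⟨i, rfl⟩
    exact (b i.castSucc).2
  · rw [finrank_span_eq_card hli, Fintype.card_fin]

theorem exists_opp_flag {B : V →ₗ[F] V →ₗ[F] F} (halt : IsAltForm B) (hnd : NondegForm B) (n : ℕ)
    (C : SFlag B (Finset.Icc 1 n)) (s : ℕ) (hs : s ∈ Finset.Icc 1 n) (S : Submodule F V)
    (hS : IsTotIso B S) (hr : finrank F S = s) (hop : bperp B (C.space s) ⊓ S = ⊥) :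
    ∃ C' : SFlag B (Finset.Icc 1 n), C'.space s = S ∧ FlagOpp C C' := by
  have hs' := Finset.mem_Icc.1 hs
  obtain ⟨C', h1, h2⟩ := exists_flag (B := B) n
    (fun k W => (IsTotIso B W ∧ finrank F W = k) ∧ bperp B (C.space k) ⊓ W = ⊥)
    (fun k W h => h.1) s hs S ⟨⟨hS, hr⟩, hop⟩
    (by
      rintro k W hk hkn ⟨⟨a, b⟩, c⟩
      have m1 : k ∈ Finset.Icc 1 n := Finset.mem_Icc.2 ⟨by omega, by omega⟩
      have m2 : k + 1 ∈ Finset.Icc 1 n := Finset.mem_Icc.2 ⟨by omega, by omega⟩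
      obtain ⟨W', w1, w2, w3, w4⟩ := step_up halt hnd (C.isotropic _ m2)
        (C.mono _ m1 _ m2 (by omega)) (by rw [C.finrank_eq _ m1, C.finrank_eq _ m2]; omega) a
        (by rw [C.finrank_eq _ m1, b]) c
      exact ⟨W', w1, ⟨w2, by rw [w3, b]⟩, w4⟩)
    (by
      rintro k W hk hkn ⟨⟨a, b⟩, c⟩
      have m1 : k ∈ Finset.Icc 1 n := Finset.mem_Icc.2 ⟨by omega, by omega⟩
      have m2 : k + 1 ∈ Finset.Icc 1 n := Finset.mem_Icc.2 ⟨by omega, by omega⟩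
      obtain ⟨W', w1, w2, w3⟩ := step_down halt
        (C.mono _ m1 _ m2 (by omega)) (by rw [C.finrank_eq _ m2, b]) c
      exact ⟨W', w1, ⟨a.mono w1, by rw [w2, C.finrank_eq _ m1]⟩, w3⟩)
  exact ⟨C', h1, fun i hi => (h2 i hi).2⟩

theorem exists_flag_through {B : V →ₗ[F] V →ₗ[F] F} (halt : IsAltForm B) (n : ℕ)
    (hdim : finrank F V = 2 * n) (s t : ℕ) (hs : s ∈ Finset.Icc 1 n) (ht : t ∈ Finset.Icc 1 n)
    (D S : Submodule F V) (hDS : D ≤ S) (hS : IsTotIso B S) (hrD : finrank F D = s)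
    (hrS : finrank F S = t) :
    ∃ C : SFlag B (Finset.Icc 1 n), C.space s = D ∧ C.space t = S := by
  have hs' := Finset.mem_Icc.1 hs
  have ht' := Finset.mem_Icc.1 ht
  have hst : s ≤ t := by rw [← hrD, ← hrS]; exact Submodule.finrank_mono hDS
  obtain ⟨C, h1, h2⟩ := exists_flag (B := B) n
    (fun k W => (IsTotIso B W ∧ finrank F W = k) ∧ (k ≤ t → W ≤ S) ∧ (t ≤ k → S ≤ W))
    (fun k W h => h.1) s hs D
    ⟨⟨hS.mono hDS, hrD⟩, fun _ => hDS, fun h =>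
      (Submodule.eq_of_le_of_finrank_le hDS (by omega)).ge⟩
    (by
      rintro k W hk hkn ⟨⟨a, b⟩, c, e⟩
      by_cases hkt : k < t
      · obtain ⟨v, hv, hvW⟩ : ∃ v ∈ S, v ∉ W := by
          by_contra! hcon
          have := Submodule.finrank_mono (show S ≤ W from hcon)
          omega
        have hle : W ⊔ Submodule.span F {v} ≤ S :=
          sup_le (c hkt.le) ((Submodule.span_singleton_le_iff_mem _ _).2 hv)
        have hfr := finrank_sup_span hvW
        exact ⟨_, le_sup_left, ⟨hS.mono hle, by rw [hfr, b]⟩, fun _ => hle, fun h =>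
          (Submodule.eq_of_le_of_finrank_le hle (by omega)).ge⟩
      · obtain ⟨d, hd, hdW⟩ := exists_ext (B := B) halt (W := W) (by omega)
        exact ⟨_, le_sup_left, ⟨isTotIso_sup_span halt a hd, by rw [finrank_sup_span hdW, b]⟩,
          fun h => by omega, fun _ => (e (by omega)).trans le_sup_left⟩)
    (by
      rintro k W hk hkn ⟨⟨a, b⟩, c, e⟩
      obtain ⟨W', hW', hr⟩ := exists_hyper b
      exact ⟨W', hW', ⟨a.mono hW', hr⟩, fun _ => hW'.trans (c (by omega)), fun h => by omega⟩)
  exact ⟨C, h1, le_antisymm ((h2 t ht).2.1 le_rfl) ((h2 t ht).2.2 le_rfl)⟩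

end Helpers

/-- for a maximum EKR-set of chambers, (a) two heavy totally isotropic
subspaces are never in "skew" position, and (b) a heavy `s`-space meets the perp of
the `s`-space of every chamber of the set nontrivially. -/
theorem stmt_7 {F V : Type} [Field F] [Fintype F] [AddCommGroup V] [Module F V]
    [FiniteDimensional F V] (n q : ℕ) (hn : 3 ≤ n) (hq : Fintype.card F = q)
    (B : V →ₗ[F] V →ₗ[F] F) (halt : IsAltForm B) (hnd : NondegForm B)
    (hdim : Module.finrank F V = 2 * n)
    (𝓕 : Set (SFlag B (Finset.Icc 1 n))) (hEKR : IsEKRFlags 𝓕)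
    (hmax : ∀ 𝓖 : Set (SFlag B (Finset.Icc 1 n)), IsEKRFlags 𝓖 → 𝓖.ncard ≤ 𝓕.ncard) :
    -- (a)
    (∀ s₁ ∈ Finset.Icc 1 n, ∀ s₂ ∈ Finset.Icc 1 n,
      ∀ S₁ S₂ : Submodule F V,
        IsTotIso B S₁ → Module.finrank F S₁ = s₁ → Heavy 𝓕 s₁ S₁ →
        IsTotIso B S₂ → Module.finrank F S₂ = s₂ → Heavy 𝓕 s₂ S₂ →
        S₁ ⊓ bperp B S₂ ≠ ⊥)
    ∧
    -- (b)
    (∀ s ∈ Finset.Icc 1 n, ∀ S : Submodule F V,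
      IsTotIso B S → Module.finrank F S = s → Heavy 𝓕 s S →
      ∀ C ∈ 𝓕, bperp B (SFlag.space C s) ⊓ S ≠ ⊥) := by
  have hb : ∀ s ∈ Finset.Icc 1 n, ∀ S : Submodule F V,
      IsTotIso B S → Module.finrank F S = s → Heavy 𝓕 s S →
      ∀ C ∈ 𝓕, bperp B (SFlag.space C s) ⊓ S ≠ ⊥ := by
    intro s hs S hS hr hH C hC hop
    obtain ⟨C', h1, h2⟩ := exists_opp_flag halt hnd n C s hs S hS hr hop
    exact hEKR C hC C' (hH C' h1) h2
  refine ⟨?_, hb⟩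
  intro s₁ hs₁ s₂ hs₂ S₁ S₂ hS₁ hr₁ hH₁ hS₂ hr₂ hH₂ hop
  obtain ⟨D, hD, h1, h2⟩ := exists_opp_sub halt hop
  obtain ⟨C, hC1, hC2⟩ := exists_flag_through halt n hdim s₁ s₂ hs₁ hs₂ D S₂ hD hS₂
    (h2.trans hr₁) hr₂
  refine hb s₁ hs₁ S₁ hS₁ hr₁ hH₁ C (hH₂ C hC2) ?_
  rw [hC1, inf_comm]
  exact opp_symm halt h2 h1
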